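/- arXiv:2508.12624 — 4 statements merged into one kernel-verified Lean document; each statement's English description precedes it below -/
import Mathlib

section
/- A primitive vector v of a symplectic lattice Λ is splitting, i.e., lies in a rank-2 sublattice Λ₁ with Λ = Λ₁ ⊕ Λ₁^⊥ (orthogonal direct sum), if and only if there exists a primitive vector w ∈ Λ with div(w) = div(v) and (v, w) = div(v). -/
noncomputable section

open Submodule

variable {V : Type} [AddCommGroup V] [Module ℚ V]

/-- The dual lattice `Λ^∨ = {v ∈ Λ⊗ℚ : (v, Λ) ⊆ ℤ}` of a lattice `L` (inside the
ambient rational vector space `V = Λ⊗ℚ`) with respect to the form `B`. -/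
def dualLattice (B : V →ₗ[ℚ] V →ₗ[ℚ] ℚ) (L : Submodule ℤ V) : Submodule ℤ V where
  carrier := {v : V | ∀ x ∈ L, ∃ n : ℤ, B v x = (n : ℚ)}
  zero_mem' := fun x _ => ⟨0, by simp⟩
  add_mem' := by
    intro a b ha hb x hx
    obtain ⟨n, hn⟩ := ha x hx
    obtain ⟨m, hm⟩ := hb x hx
    exact ⟨n + m, by rw [map_add, LinearMap.add_apply, hn, hm]; push_cast; ring⟩
  smul_mem' := by
    intro c a ha x hx
    obtain ⟨n, hn⟩ := ha x hx
    refine ⟨c * n, ?_⟩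
    have h1 : B (c • a) x = (B.flip x) (c • a) := rfl
    rw [h1, map_zsmul, LinearMap.flip_apply, hn, zsmul_eq_mul]
    push_cast; ring

/-- A vector `v` is primitive in the lattice `L` if `ℚv ∩ L = ℤv`. -/
def IsPrimitive (L : Submodule ℤ V) (v : V) : Prop :=
  v ∈ L ∧ (Submodule.span ℚ {v}).restrictScalars ℤ ⊓ L = Submodule.span ℤ {v}

/-- `div(v) = d`, i.e. the ideal `(v, L) ⊆ ℤ` is generated by the positive integer `d`. -/
def HasDiv (B : V →ₗ[ℚ] V →ₗ[ℚ] ℚ) (L : Submodule ℤ V) (v : V) (d : ℕ) : Prop :=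
  0 < d ∧ (∀ x ∈ L, ∃ n : ℤ, B v x = (n : ℚ) * (d : ℚ)) ∧ (∃ x ∈ L, B v x = (d : ℚ))

/-- `v* = v / div(v)`. -/
def vstar (v : V) (d : ℕ) : V := ((d : ℚ))⁻¹ • v

lemma vstar_mem {B : V →ₗ[ℚ] V →ₗ[ℚ] ℚ} {L : Submodule ℤ V} {v : V} {d : ℕ}
    (h : HasDiv B L v d) : vstar v d ∈ dualLattice B L := by
  intro x hx
  obtain ⟨n, hn⟩ := h.2.1 x hx
  refine ⟨n, ?_⟩
  have hd : (d : ℚ) ≠ 0 := Nat.cast_ne_zero.mpr h.1.ne'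
  show B (((d : ℚ))⁻¹ • v) x = (n : ℚ)
  rw [map_smul, LinearMap.smul_apply, hn, smul_eq_mul]
  field_simp

/-- The discriminant group `D_Λ = Λ^∨ / Λ`. -/
abbrev DiscGroup (B : V →ₗ[ℚ] V →ₗ[ℚ] ℚ) (L : Submodule ℤ V) :=
  dualLattice B L ⧸ (L.comap (dualLattice B L).subtype)

/-- The class of an element of the dual lattice in the discriminant group. -/
def discCls (B : V →ₗ[ℚ] V →ₗ[ℚ] ℚ) (L : Submodule ℤ V) (v : dualLattice B L) :
    DiscGroup B L := Submodule.Quotient.mk v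

/-- `γ` is an isometry of the lattice `L`, i.e. an element of `Sp(Λ)` (viewed as a
rational linear automorphism of the ambient space preserving `L` and the form). -/
def IsIsometry (B : V →ₗ[ℚ] V →ₗ[ℚ] ℚ) (L : Submodule ℤ V) (γ : V ≃ₗ[ℚ] V) : Prop :=
  (∀ v, v ∈ L ↔ γ v ∈ L) ∧ ∀ v w, B (γ v) (γ w) = B v w

/-- `γ` lies in `Γ_Λ`: it is an isometry of `L` acting trivially on the discriminant
group, i.e. `γ(v) ≡ v mod Λ` for every `v ∈ Λ^∨`. -/
def InGamma (B : V →ₗ[ℚ] V →ₗ[ℚ] ℚ) (L : Submodule ℤ V) (γ : V ≃ₗ[ℚ] V) : Prop :=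
  IsIsometry B L γ ∧ ∀ v ∈ dualLattice B L, γ v - v ∈ L

lemma isometry_dual_mem {B : V →ₗ[ℚ] V →ₗ[ℚ] ℚ} {L : Submodule ℤ V} {γ : V ≃ₗ[ℚ] V}
    (h : IsIsometry B L γ) {u : V} (hu : u ∈ dualLattice B L) :
    γ u ∈ dualLattice B L := by
  intro x hx
  have hx' : γ.symm x ∈ L := by
    rw [h.1 (γ.symm x), LinearEquiv.apply_symm_apply]
    exact hx
  obtain ⟨n, hn⟩ := hu (γ.symm x) hx'
  refine ⟨n, ?_⟩
  have := h.2 u (γ.symm x)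
  rw [LinearEquiv.apply_symm_apply] at this
  rw [this, hn]

/-- The transvection `T_{l,m} : v ↦ v + (l,v)m + (m,v)l` on the rational vector space. -/
def transvection (B : V →ₗ[ℚ] V →ₗ[ℚ] ℚ) (l m : V) : V →ₗ[ℚ] V :=
  LinearMap.id + (B l).smulRight m + (B m).smulRight l

/-- An orthogonal decomposition `Λ = U ⊕ Λ'` with `U` a hyperbolic plane spanned by
`e, f` with `(e,f) = 1`. -/
def OrthoDecompU (B : V →ₗ[ℚ] V →ₗ[ℚ] ℚ) (L : Submodule ℤ V)
    (e f : V) (L' : Submodule ℤ V) : Prop :=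
  e ∈ L ∧ f ∈ L ∧ L' ≤ L ∧ B e f = 1 ∧
  (∀ z ∈ L', B e z = 0 ∧ B f z = 0) ∧
  Submodule.span ℤ {e, f} ⊔ L' = L

/-- An orthogonal decomposition `Λ = U₁ ⊕ U₂ ⊕ Λ''` with `U₁, U₂` hyperbolic planes. -/
def OrthoDecompUU (B : V →ₗ[ℚ] V →ₗ[ℚ] ℚ) (L : Submodule ℤ V)
    (e₁ f₁ e₂ f₂ : V) (L'' : Submodule ℤ V) : Prop :=
  e₁ ∈ L ∧ f₁ ∈ L ∧ e₂ ∈ L ∧ f₂ ∈ L ∧ L'' ≤ L ∧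
  B e₁ f₁ = 1 ∧ B e₂ f₂ = 1 ∧
  B e₁ e₂ = 0 ∧ B e₁ f₂ = 0 ∧ B f₁ e₂ = 0 ∧ B f₁ f₂ = 0 ∧
  (∀ z ∈ L'', B e₁ z = 0 ∧ B f₁ z = 0 ∧ B e₂ z = 0 ∧ B f₂ z = 0) ∧
  Submodule.span ℤ {e₁, f₁} ⊔ Submodule.span ℤ {e₂, f₂} ⊔ L'' = L

/-- An orthogonal decomposition `Λ = U ⊕ U(p) ⊕ ⋯ ⊕ U(p)`. -/
def OrthoDecompUUp (B : V →ₗ[ℚ] V →ₗ[ℚ] ℚ) (L : Submodule ℤ V) (p : ℕ)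
    (e f : V) {ι : Type} (E F : ι → V) : Prop :=
  e ∈ L ∧ f ∈ L ∧ (∀ i, E i ∈ L) ∧ (∀ i, F i ∈ L) ∧
  B e f = 1 ∧ (∀ i, B (E i) (F i) = (p : ℚ)) ∧
  (∀ i, B e (E i) = 0 ∧ B e (F i) = 0 ∧ B f (E i) = 0 ∧ B f (F i) = 0) ∧
  (∀ i j, i ≠ j → B (E i) (E j) = 0 ∧ B (E i) (F j) = 0 ∧ B (F i) (F j) = 0) ∧
  Submodule.span ℤ ({e, f} ∪ Set.range E ∪ Set.range F) = L

/-- An orthogonal decomposition `Λ = U(d₁) ⊕ ⋯ ⊕ U(d_g)`. -/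
def OrthoDecompType (B : V →ₗ[ℚ] V →ₗ[ℚ] ℚ) (L : Submodule ℤ V) {g : ℕ}
    (d : Fin g → ℕ) (E F : Fin g → V) : Prop :=
  (∀ i, E i ∈ L) ∧ (∀ i, F i ∈ L) ∧
  (∀ i, B (E i) (F i) = (d i : ℚ)) ∧
  (∀ i j, i ≠ j → B (E i) (E j) = 0 ∧ B (E i) (F j) = 0 ∧ B (F i) (F j) = 0) ∧
  Submodule.span ℤ (Set.range E ∪ Set.range F) = L

lemma coe_int_addCircle (n : ℤ) : (((n : ℚ) : AddCircle (1 : ℚ))) = 0 := by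
  have hmem : ((n : ℚ)) ∈ AddSubgroup.zmultiples (1 : ℚ) := ⟨n, by simp⟩
  exact (QuotientAddGroup.eq_zero_iff _).mpr hmem

lemma bilin_antisymm (B : V →ₗ[ℚ] V →ₗ[ℚ] ℚ) (halt : ∀ v, B v v = 0) (a b : V) :
    B a b = - B b a := by
  have h := halt (a + b)
  simp only [map_add, LinearMap.add_apply] at h
  rw [halt a, halt b] at h
  linarith

/-- The `ℚ/ℤ`-valued pairing on the dual lattice. -/
def rationalPairing (B : V →ₗ[ℚ] V →ₗ[ℚ] ℚ) (L : Submodule ℤ V) :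
    dualLattice B L →ₗ[ℤ] dualLattice B L →ₗ[ℤ] AddCircle (1 : ℚ) :=
  LinearMap.mk₂ ℤ (fun v w => ((B v.1 w.1 : ℚ) : AddCircle (1 : ℚ)))
    (fun v v' w => by
      beta_reduce
      rw [Submodule.coe_add, map_add, LinearMap.add_apply]
      exact QuotientAddGroup.mk_add (AddSubgroup.zmultiples (1 : ℚ)) _ _)
    (fun c v w => by
      beta_reduce
      have h1 : B ((c • v : dualLattice B L) : V) (w : V)
          = c • (B (v : V) (w : V)) := by
        have h2 : B ((c • v : dualLattice B L) : V) (w : V)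
            = (B.flip (w : V)) ((c • v : dualLattice B L) : V) := rfl
        rw [h2, Submodule.coe_smul, map_zsmul, LinearMap.flip_apply]
      rw [h1]
      exact QuotientAddGroup.mk_zsmul (AddSubgroup.zmultiples (1 : ℚ)) _ _
    )
    (fun v w w' => by
      beta_reduce
      rw [Submodule.coe_add, map_add]
      exact QuotientAddGroup.mk_add (AddSubgroup.zmultiples (1 : ℚ)) _ _)
    (fun c v w => by
      beta_reduce
      rw [Submodule.coe_smul, map_zsmul]
      exact QuotientAddGroup.mk_zsmul (AddSubgroup.zmultiples (1 : ℚ)) _ _)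

/-- The discriminant form on `D_Λ`, with values in `ℚ/ℤ`. -/
def discForm (B : V →ₗ[ℚ] V →ₗ[ℚ] ℚ) (L : Submodule ℤ V) (halt : ∀ v, B v v = 0) :
    DiscGroup B L →ₗ[ℤ] DiscGroup B L →ₗ[ℤ] AddCircle (1 : ℚ) :=
  (Submodule.liftQ _
    ((Submodule.liftQ _ (rationalPairing B L) (by
      intro v hv
      rw [LinearMap.mem_ker]
      refine LinearMap.ext fun w => ?_
      have hv' : (v : V) ∈ L := hv
      obtain ⟨n, hn⟩ := w.2 (v : V) hv'
      show ((B (v : V) (w : V) : ℚ) : AddCircle (1 : ℚ)) = 0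
      have h3 : B (v : V) (w : V) = ((-n : ℤ) : ℚ) := by
        rw [bilin_antisymm B halt, hn]; push_cast; ring
      rw [h3]
      exact coe_int_addCircle _)).flip) (by
      intro w hw
      rw [LinearMap.mem_ker]
      refine LinearMap.ext fun x => ?_
      obtain ⟨v, rfl⟩ := Submodule.Quotient.mk_surjective _ x
      have hw' : (w : V) ∈ L := hw
      obtain ⟨n, hn⟩ := v.2 (w : V) hw'
      show ((B (v : V) (w : V) : ℚ) : AddCircle (1 : ℚ)) = 0
      rw [hn]
      exact coe_int_addCircle _)).flip

/-- The orthogonal complement of a subgroup of the discriminant group with respect to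
the discriminant form. -/
def discOrth (B : V →ₗ[ℚ] V →ₗ[ℚ] ℚ) (L : Submodule ℤ V) (halt : ∀ v, B v v = 0)
    (D' : Submodule ℤ (DiscGroup B L)) : Submodule ℤ (DiscGroup B L) :=
  ⨅ y ∈ D', LinearMap.ker ((discForm B L halt).flip y)

/-- A splitting element of the discriminant group: `x` of order `d` lies in a subgroup
`D' ≅ (ℤ/d)²` with `D_Λ = D' ⊕ D'^⊥`. -/
def IsSplitElem (B : V →ₗ[ℚ] V →ₗ[ℚ] ℚ) (L : Submodule ℤ V) (halt : ∀ v, B v v = 0)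
    (x : DiscGroup B L) : Prop :=
  ∃ D' : Submodule ℤ (DiscGroup B L), x ∈ D' ∧
    Nonempty (D' ≃+ (ZMod (addOrderOf x) × ZMod (addOrderOf x))) ∧
    D' ⊔ discOrth B L halt D' = ⊤ ∧ D' ⊓ discOrth B L halt D' = ⊥

/-- The orthogonal complement `Λ₁^⊥ = {z ∈ Λ : (z, Λ₁) = 0}` of a sublattice inside `L`. -/
def orthCompIn (B : V →ₗ[ℚ] V →ₗ[ℚ] ℚ) (L L₁ : Submodule ℤ V) : Submodule ℤ V where
  carrier := {z | z ∈ L ∧ ∀ y ∈ L₁, B z y = 0}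
  zero_mem' := ⟨L.zero_mem, fun y _ => by simp⟩
  add_mem' := by
    intro a b ha hb
    refine ⟨L.add_mem ha.1 hb.1, fun y hy => ?_⟩
    rw [map_add, LinearMap.add_apply, ha.2 y hy, hb.2 y hy, add_zero]
  smul_mem' := by
    intro c a ha
    refine ⟨L.smul_mem c ha.1, fun y hy => ?_⟩
    have h1 : B (c • a) y = (B.flip y) (c • a) := rfl
    rw [h1, map_zsmul, LinearMap.flip_apply, ha.2 y hy, smul_zero]

/-- A splitting (primitive) vector: `v` lies in a rank 2 sublattice `Λ₁` with
`Λ = Λ₁ ⊕ Λ₁^⊥` (orthogonal direct sum). -/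
def IsSplitVec (B : V →ₗ[ℚ] V →ₗ[ℚ] ℚ) (L : Submodule ℤ V) (v : V) : Prop :=
  ∃ L₁ : Submodule ℤ V, v ∈ L₁ ∧ L₁ ≤ L ∧ Module.finrank ℤ L₁ = 2 ∧
    L₁ ⊔ orthCompIn B L L₁ = L ∧ L₁ ⊓ orthCompIn B L L₁ = ⊥

end


/-- A primitive vector `v` is splitting iff there is a primitive vector `w` with
`div(w) = div(v)` and `(v, w) = div(v)`. -/
theorem splitting_iff_exists_partner
    (V : Type) [AddCommGroup V] [Module ℚ V]
    (B : V →ₗ[ℚ] V →ₗ[ℚ] ℚ)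
    (halt : ∀ v, B v v = 0)
    (hnd : ∀ v : V, (∀ w, B v w = 0) → v = 0)
    (L : Submodule ℤ V) (hfg : L.FG)
    (hspan : Submodule.span ℚ (L : Set V) = ⊤)
    (hint : ∀ x ∈ L, ∀ y ∈ L, ∃ n : ℤ, B x y = (n : ℚ))
    (v : V) (d : ℕ) (hv : IsPrimitive L v) (hd : HasDiv B L v d) :
    IsSplitVec B L v ↔
      ∃ w : V, IsPrimitive L w ∧ HasDiv B L w d ∧ B v w = (d : ℚ) := by
  have hB2 : ∀ (n : ℤ) (x y : V), B x (n • y) = (n : ℚ) * B x y := fun n x y => by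
    rw [map_zsmul, zsmul_eq_mul]
  have hB1 : ∀ (n : ℤ) (x y : V), B (n • x) y = (n : ℚ) * B x y := fun n x y => by
    rw [bilin_antisymm B halt, hB2, bilin_antisymm B halt x y]; ring
  have hd0 : (d : ℚ) ≠ 0 := Nat.cast_ne_zero.mpr hd.1.ne'
  have hanti := bilin_antisymm B halt
  constructor
  · rintro ⟨L₁, hvL₁, hL₁, hrank, hsup, -⟩
    have hdec : ∀ x ∈ L, ∃ y ∈ L₁, y ∈ L ∧ ∀ u ∈ L₁, B u x = B u y := by
      intro x hx
      rw [← hsup] at hx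
      obtain ⟨y, hy, z, hz, rfl⟩ := Submodule.mem_sup.mp hx
      refine ⟨y, hy, hL₁ hy, fun u hu => ?_⟩
      rw [map_add, hanti u z, hz.2 u hu]; ring
    obtain ⟨x, hx, hvx⟩ := hd.2.2
    obtain ⟨w, hw, hwL, hxw⟩ := hdec x hx
    have hvw : B v w = d := by rw [← hxw v hvL₁, hvx]
    have hwv : B w v = -d := by rw [hanti, hvw]
    refine ⟨w, ⟨hwL, ?_⟩, ⟨hd.1, ?_, ?_⟩, hvw⟩
    · apply le_antisymm
      · rintro y ⟨hy1, hy2⟩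
        obtain ⟨q, rfl⟩ := Submodule.mem_span_singleton.mp
          ((Submodule.restrictScalars_mem ℤ _ _).mp hy1)
        obtain ⟨n, hn⟩ := hd.2.1 _ hy2
        rw [map_smul, hvw, smul_eq_mul] at hn
        have hq : q = n := mul_right_cancel₀ hd0 hn
        rw [hq, Int.cast_smul_eq_zsmul]
        exact Submodule.smul_mem _ _ (Submodule.mem_span_singleton_self w)
      · rw [Submodule.span_singleton_le_iff_mem]
        exact ⟨Submodule.mem_span_singleton_self (R := ℚ) w, hwL⟩
    · intro y' hy'
      obtain ⟨y, hy, hyL, hyy⟩ := hdec y' hy'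
      rw [hyy w hw]
      obtain ⟨n, hn⟩ := hd.2.1 y hyL
      haveI : Module.Finite ℤ L := Module.Finite.iff_fg.mpr hfg
      haveI : Module.Finite ℤ L₁ := Module.Finite.iff_fg.mpr
        (Submodule.FG.of_le hfg hL₁)
      have hdep : ¬ LinearIndependent ℤ (![⟨v, hvL₁⟩, ⟨w, hw⟩, ⟨y, hy⟩] : Fin 3 → L₁) := by
        intro h
        have := h.fintype_card_le_finrank
        rw [hrank] at this
        simp at this
      rw [Fintype.not_linearIndependent_iff] at hdep
      obtain ⟨g, hg, hg0⟩ := hdep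
      have hrel : g 0 • v + g 1 • w + g 2 • y = 0 := by
        have := congrArg (Subtype.val) hg
        simpa [Fin.sum_univ_three] using this
      have e1 := congrArg (B v) hrel
      have e2 := congrArg (B w) hrel
      simp only [map_add, hB2, halt, hvw, hwv, hn, map_zero] at e1 e2
      have hr : g 2 ≠ 0 := by
        intro h2
        rw [h2] at e1 e2
        have h1 : g 1 = 0 := by
          have : (g 1 : ℚ) * d = 0 := by push_cast at e1; linarith
          exact_mod_cast (mul_eq_zero.mp this).resolve_right hd0
        have h0 : g 0 = 0 := by
          have : (g 0 : ℚ) * d = 0 := by push_cast at e2; linarith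
          exact_mod_cast (mul_eq_zero.mp this).resolve_right hd0
        obtain ⟨i, hi⟩ := hg0
        fin_cases i
        · exact hi h0
        · exact hi h1
        · exact hi h2
      have hrq : (g 2 : ℚ) ≠ 0 := by exact_mod_cast hr
      have e3 : (g 1 : ℚ) = - (g 2 * n) := by
        apply mul_right_cancel₀ hd0; linarith
      have e3' : g 1 = - (g 2 * n) := by exact_mod_cast e3
      have hmem : y - n • w ∈ Submodule.span ℤ {v} := by
        rw [← hv.2]
        refine ⟨?_, L.sub_mem hyL (L.smul_mem n hwL)⟩
        apply Submodule.mem_span_singleton.mpr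
        refine ⟨-(g 0 : ℚ) / g 2, ?_⟩
        have h4 : (g 2 : ℚ) • (y - n • w) = (-(g 0 : ℚ)) • v := by
          rw [← Int.cast_neg, Int.cast_smul_eq_zsmul, Int.cast_smul_eq_zsmul]
          rw [e3'] at hrel
          rw [← sub_eq_zero, ← hrel]
          module
        rw [div_eq_inv_mul, mul_smul, ← h4, smul_smul, inv_mul_cancel₀ hrq, one_smul]
      obtain ⟨m, hm⟩ := Submodule.mem_span_singleton.mp hmem
      have h5 : y = m • v + n • w := by rw [hm]; abel
      refine ⟨-m, ?_⟩
      rw [h5, map_add, hB2, hB2, halt, hwv]; push_cast; ring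
    · refine ⟨-v, L.neg_mem hv.1, ?_⟩
      rw [map_neg, hwv, neg_neg]
  · rintro ⟨w, ⟨hwL, -⟩, hdw, hvw⟩
    have hwv : B w v = -d := by rw [hanti, hvw]
    have hmv : v ∈ Submodule.span ℤ {v, w} := Submodule.subset_span (by simp)
    have hmw : w ∈ Submodule.span ℤ {v, w} := Submodule.subset_span (by simp)
    have hle : Submodule.span ℤ {v, w} ≤ L := by
      rw [Submodule.span_le]
      rintro x (rfl | rfl)
      · exact hv.1
      · exact hwL
    have hzero : ∀ a b : ℤ, B (a • v + b • w) v = 0 → B (a • v + b • w) w = 0 →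
        a = 0 ∧ b = 0 := by
      intro a b h1 h2
      simp only [map_add, LinearMap.add_apply, hB1, halt, hvw, hwv] at h1 h2
      constructor
      · have : (a : ℚ) * d = 0 := by linarith
        exact_mod_cast (mul_eq_zero.mp this).resolve_right hd0
      · have : (b : ℚ) * d = 0 := by linarith
        exact_mod_cast (mul_eq_zero.mp this).resolve_right hd0
    refine ⟨Submodule.span ℤ {v, w}, hmv, hle, ?_, ?_, ?_⟩
    · have hli : LinearIndependent ℤ ![v, w] := by
        rw [LinearIndependent.pair_iff]
        intro a b h
        exact hzero a b (by rw [h]; simp) (by rw [h]; simp)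
      have := finrank_span_eq_card hli
      rw [show Set.range ![v, w] = {v, w} by
        ext x; simp [eq_comm, or_comm]] at this
      simpa using this
    · apply le_antisymm
      · exact sup_le hle (fun z hz => hz.1)
      · intro x hx
        obtain ⟨n, hn⟩ := hd.2.1 x hx
        obtain ⟨m, hm⟩ := hdw.2.1 x hx
        have hy : n • w - m • v ∈ Submodule.span ℤ {v, w} :=
          Submodule.sub_mem _ (Submodule.smul_mem _ _ hmw) (Submodule.smul_mem _ _ hmv)
        refine Submodule.mem_sup.mpr ⟨_, hy, x - (n • w - m • v),
          ⟨L.sub_mem hx (hle hy), ?_⟩, by abel⟩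
        intro u hu
        obtain ⟨a, b, rfl⟩ := Submodule.mem_span_pair.mp hu
        rw [hanti]
        simp only [map_add, map_sub, LinearMap.add_apply, hB1, hB2, halt, hvw, hwv, hn, hm]
        ring
    · rw [eq_bot_iff]
      rintro x ⟨hx, hx2⟩
      obtain ⟨a, b, rfl⟩ := Submodule.mem_span_pair.mp hx
      obtain ⟨rfl, rfl⟩ := hzero a b (hx2.2 v hmv) (hx2.2 w hmw)
      simp
end

section
/- Let Λ = U ⊕ Λ' be a symplectic lattice with U spanned by e, f satisfying (e, f) = 1. Let v ∈ Λ' be primitive in Λ with div(v) = d, let y ∈ D_Λ be an element of order d with ([v*], y) = 1/d in ℚ/ℤ, and let w' ∈ (Λ')^∨ be a vector whose class in D_{Λ'} = D_Λ equals y. Write (v, dw') = d + αd² with α ∈ ℤ, and set w = dw' + αde ∈ Λ. Then w is a primitive vector of Λ with div(w) = d and (v + df, w) = d; in particular v + df is splitting. -/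
section HypHelpers

variable {V : Type} [AddCommGroup V] [Module ℚ V]

lemma hyp_Bz (B : V →ₗ[ℚ] V →ₗ[ℚ] ℚ) (c : ℤ) (a b : V) : B (c • a) b = c * B a b := by
  rw [← Int.cast_smul_eq_zsmul ℚ c a, map_smul, LinearMap.smul_apply, smul_eq_mul]

lemma hyp_zB (B : V →ₗ[ℚ] V →ₗ[ℚ] ℚ) (c : ℤ) (a b : V) : B a (c • b) = c * B a b := by
  rw [← Int.cast_smul_eq_zsmul ℚ c b, map_smul, smul_eq_mul]

/-- A pair `u, w` of lattice vectors with pairing `d`, both of divisor divisible by `d`. -/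
lemma hyp_pair (B : V →ₗ[ℚ] V →ₗ[ℚ] ℚ) (halt : ∀ v, B v v = 0) (L : Submodule ℤ V)
    (d : ℕ) (hd : 0 < d) (u w : V) (hu : u ∈ L) (hw : w ∈ L) (huw : B u w = d)
    (hud : ∀ x ∈ L, ∃ n : ℤ, B u x = (n : ℚ) * (d : ℚ))
    (hwd : ∀ x ∈ L, ∃ n : ℤ, B w x = (n : ℚ) * (d : ℚ)) :
    IsPrimitive L w ∧ HasDiv B L w d ∧ IsSplitVec B L u := by
  have hd0 : (d : ℚ) ≠ 0 := Nat.cast_ne_zero.mpr hd.ne'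
  have hwu : B w u = -d := by rw [bilin_antisymm B halt, huw]
  refine ⟨⟨hw, ?_⟩, ⟨hd, hwd, -u, L.neg_mem hu, ?_⟩, ?_⟩
  · apply le_antisymm
    · rintro x ⟨hx, hxL⟩
      obtain ⟨c, rfl⟩ := Submodule.mem_span_singleton.mp hx
      obtain ⟨n, hn⟩ := hud _ hxL
      rw [map_smul, huw, smul_eq_mul] at hn
      have : c = n := mul_right_cancel₀ hd0 hn
      rw [this]
      exact Submodule.mem_span_singleton.mpr ⟨n, (Int.cast_smul_eq_zsmul ℚ n w).symm⟩
    · rw [Submodule.span_singleton_le_iff_mem]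
      exact ⟨Submodule.mem_span_singleton_self w, hw⟩
  · rw [map_neg, hwu, neg_neg]
  · have hli : LinearIndependent ℤ ![u, w] := by
      rw [LinearIndependent.pair_iff]
      intro s t hst
      have h1 : B u (s • u + t • w) = 0 := by rw [hst, map_zero]
      have h2 : B w (s • u + t • w) = 0 := by rw [hst, map_zero]
      rw [map_add, hyp_zB, hyp_zB, halt, huw] at h1
      rw [map_add, hyp_zB, hyp_zB, halt, hwu] at h2
      constructor
      · have : (s : ℚ) = 0 := by simpa [hd0] using h2
        exact_mod_cast this
      · have : (t : ℚ) = 0 := by simpa [hd0] using h1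
        exact_mod_cast this
    have hle : Submodule.span ℤ {u, w} ≤ L := by
      rw [Submodule.span_le]
      rintro x (rfl | rfl)
      · exact hu
      · exact hw
    refine ⟨Submodule.span ℤ {u, w}, Submodule.subset_span (by simp), hle, ?_, ?_, ?_⟩
    · have := finrank_span_eq_card hli
      rw [show Set.range ![u, w] = {u, w} by simp [Set.pair_comm]] at this
      rw [this, Fintype.card_fin]
    · apply le_antisymm
      · exact sup_le hle (fun x hx => hx.1)
      · intro x hx
        obtain ⟨m, hm⟩ := hud x hx
        obtain ⟨n, hn⟩ := hwd x hx
        have hy : (-n) • u + m • w ∈ Submodule.span ℤ {u, w} :=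
          Submodule.mem_span_pair.mpr ⟨-n, m, rfl⟩
        refine Submodule.mem_sup.mpr ⟨_, hy, x - ((-n) • u + m • w), ⟨L.sub_mem hx (hle hy), ?_⟩,
          by abel⟩
        intro z hz
        obtain ⟨a, b, rfl⟩ := Submodule.mem_span_pair.mp hz
        rw [bilin_antisymm B halt]
        simp only [map_add, map_sub, LinearMap.add_apply, hyp_Bz, hyp_zB, halt, huw, hwu, hm, hn]
        push_cast
        ring
    · rw [eq_bot_iff]
      rintro x ⟨hx, -, hx2⟩
      obtain ⟨a, b, rfl⟩ := Submodule.mem_span_pair.mp hx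
      have h1 := hx2 u (Submodule.subset_span (by simp))
      have h2 := hx2 w (Submodule.subset_span (by simp))
      simp only [map_add, LinearMap.add_apply, hyp_Bz, halt, huw, hwu] at h1 h2
      have ha : a = 0 := by
        have : (a : ℚ) = 0 := by simpa [hd0] using h2
        exact_mod_cast this
      have hb : b = 0 := by
        have : (b : ℚ) = 0 := by simpa [hd0] using h1
        exact_mod_cast this
      simp [ha, hb]

end HypHelpers

/-- Construction of a splitting partner (Claim 3.3): with `Λ = U ⊕ Λ'`, `v ∈ Λ'`
primitive of divisor `d`, `y ∈ D_Λ` of order `d` with `([v*], y) = 1/d`, `w' ∈ (Λ')^∨`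
representing `y`, and `(v, dw') = d + αd²`, the vector `w = dw' + αde` is primitive with
`div(w) = d` and `(v + df, w) = d`; in particular `v + df` is splitting. -/
theorem splitting_partner_construction
    (V : Type) [AddCommGroup V] [Module ℚ V]
    (B : V →ₗ[ℚ] V →ₗ[ℚ] ℚ)
    (halt : ∀ v, B v v = 0)
    (hnd : ∀ v : V, (∀ w, B v w = 0) → v = 0)
    (L : Submodule ℤ V) (hfg : L.FG)
    (hspan : Submodule.span ℚ (L : Set V) = ⊤)
    (hint : ∀ x ∈ L, ∀ y ∈ L, ∃ n : ℤ, B x y = (n : ℚ))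
    (e f : V) (L' : Submodule ℤ V)
    (hdec : OrthoDecompU B L e f L')
    (v : V) (hv' : v ∈ L') (hv : IsPrimitive L v) (d : ℕ) (hd : HasDiv B L v d)
    (y : DiscGroup B L) (hyord : addOrderOf y = d)
    (hpair : discForm B L halt (discCls B L ⟨vstar v d, vstar_mem hd⟩) y =
      ((((d : ℚ))⁻¹ : ℚ) : AddCircle (1 : ℚ)))
    (w' : V) (hw'mem : w' ∈ dualLattice B L) (hw'span : w' ∈ Submodule.span ℚ (L' : Set V))
    (hw'y : discCls B L ⟨w', hw'mem⟩ = y)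
    (α : ℤ) (hα : B v ((d : ℤ) • w') = (d : ℚ) + (α : ℚ) * (d : ℚ) ^ 2) :
    IsPrimitive L ((d : ℤ) • w' + (α * (d : ℤ)) • e) ∧
    HasDiv B L ((d : ℤ) • w' + (α * (d : ℤ)) • e) d ∧
    B (v + (d : ℤ) • f) ((d : ℤ) • w' + (α * (d : ℤ)) • e) = (d : ℚ) ∧
    IsSplitVec B L (v + (d : ℤ) • f) := by
  obtain ⟨he, hf, hL', hef, horth, hsup⟩ := hdec
  have hd0 : (d : ℚ) ≠ 0 := Nat.cast_ne_zero.mpr hd.1.ne'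
  have hdw : (d : ℤ) • w' ∈ L := by
    have h1 : d • y = 0 := by rw [← hyord]; exact addOrderOf_nsmul_eq_zero y
    rw [← hw'y] at h1
    have h2 : (Submodule.Quotient.mk (d • (⟨w', hw'mem⟩ : dualLattice B L)) : DiscGroup B L) = 0 :=
      h1
    rw [Submodule.Quotient.mk_eq_zero] at h2
    have h3 : d • w' ∈ L := h2
    rwa [natCast_zsmul]
  have hfw : B f w' = 0 := by
    have : Submodule.span ℚ (L' : Set V) ≤ LinearMap.ker (B f) := by
      rw [Submodule.span_le]
      intro z hz
      exact (horth z hz).2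
    exact this hw'span
  have hfe : B f e = -1 := by rw [bilin_antisymm B halt, hef]
  have hve : B v e = 0 := by rw [bilin_antisymm B halt, (horth v hv').1, neg_zero]
  have huw : B (v + (d : ℤ) • f) ((d : ℤ) • w' + (α * (d : ℤ)) • e) = (d : ℚ) := by
    rw [map_add, map_add, LinearMap.add_apply, LinearMap.add_apply, hα]
    simp only [hyp_Bz, hyp_zB, hfw, hfe, hve]
    push_cast
    ring
  obtain ⟨h1, h2, h3⟩ := hyp_pair B halt L d hd.1 (v + (d : ℤ) • f)
    ((d : ℤ) • w' + (α * (d : ℤ)) • e)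
    (L.add_mem hv.1 (L.smul_mem _ hf)) (L.add_mem hdw (L.smul_mem _ he)) huw
    (by
      intro x hx
      obtain ⟨n, hn⟩ := hd.2.1 x hx
      obtain ⟨m, hm⟩ := hint f hf x hx
      refine ⟨n + m, ?_⟩
      rw [map_add, LinearMap.add_apply, hyp_Bz, hn, hm]
      push_cast
      ring)
    (by
      intro x hx
      obtain ⟨n, hn⟩ := hw'mem x hx
      obtain ⟨m, hm⟩ := hint e he x hx
      refine ⟨n + α * m, ?_⟩
      rw [map_add, LinearMap.add_apply, hyp_Bz, hyp_Bz, hn, hm]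
      push_cast
      ring)
  exact ⟨h1, h2, huw, h3⟩
end

section
/- Let p be a prime and let D = 𝒰(p^{e₁}) ⊕ ⋯ ⊕ 𝒰(p^{e_g}) be an orthogonal direct sum of finite symplectic groups 𝒰(p^{eᵢ}) with 0 ≤ e₁ ≤ ⋯ ≤ e_g. Write a nonzero element x ∈ D as x = Σᵢ xᵢ with xᵢ ∈ 𝒰(p^{eᵢ}), let p^{fᵢ} be the order of xᵢ and p^f = maxᵢ p^{fᵢ} the order of x. Then x is splitting if and only if there exists an index i such that fᵢ = f and fᵢ = eᵢ. -/
noncomputable section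

/-- The homomorphism `ℤ/n → ℚ/ℤ` sending `1` to `1/n`. -/
def uHom (n : ℕ) : ZMod n →+ AddCircle (1 : ℚ) :=
  ZMod.lift n ⟨zmultiplesHom _ ((((n : ℚ))⁻¹ : ℚ) : AddCircle (1 : ℚ)), by
    show ((n : ℤ)) • ((((n : ℚ))⁻¹ : ℚ) : AddCircle (1 : ℚ)) = 0
    rcases Nat.eq_zero_or_pos n with h | h
    · subst h; simp
    · have h1 : ((n : ℤ)) • ((((n : ℚ))⁻¹ : ℚ) : AddCircle (1 : ℚ))
          = ((((n : ℤ) • (((n : ℚ))⁻¹) : ℚ)) : AddCircle (1 : ℚ)) :=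
        (QuotientAddGroup.mk_zsmul (AddSubgroup.zmultiples (1 : ℚ)) _ _).symm
      rw [h1]
      have h2 : ((n : ℤ) • (((n : ℚ))⁻¹) : ℚ) = 1 := by
        rw [zsmul_eq_mul]
        push_cast
        field_simp
      rw [h2]
      exact (QuotientAddGroup.eq_zero_iff _).mpr ⟨1, by simp⟩⟩

/-- The nondegenerate `ℚ/ℤ`-valued alternating form on the finite symplectic group
`𝒰(n) = (ℤ/n) ⊕ (ℤ/n)`, `((a,b),(c,d)) ↦ (ad - bc)/n`. It is the discriminant form
of the scaled hyperbolic plane `U(n)`. -/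
def uForm (n : ℕ) (x y : ZMod n × ZMod n) : AddCircle (1 : ℚ) :=
  uHom n (x.1 * y.2 - x.2 * y.1)

lemma uForm_zero_left (n : ℕ) (y : ZMod n × ZMod n) : uForm n 0 y = 0 := by
  unfold uForm
  simp

lemma uForm_add_left (n : ℕ) (x x' y : ZMod n × ZMod n) :
    uForm n (x + x') y = uForm n x y + uForm n x' y := by
  unfold uForm
  rw [← map_add]
  congr 1
  simp only [Prod.fst_add, Prod.snd_add]
  ring

lemma uForm_neg_left (n : ℕ) (x y : ZMod n × ZMod n) :
    uForm n (-x) y = - uForm n x y := by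
  unfold uForm
  rw [← map_neg]
  congr 1
  simp only [Prod.fst_neg, Prod.snd_neg]
  ring

/-- The form on the orthogonal direct sum `𝒰(p^{e 1}) ⊕ ⋯ ⊕ 𝒰(p^{e g})`. -/
def totalForm (p : ℕ) {g : ℕ} (e : Fin g → ℕ)
    (x y : ∀ i, ZMod (p ^ e i) × ZMod (p ^ e i)) : AddCircle (1 : ℚ) :=
  ∑ i, uForm (p ^ e i) (x i) (y i)

/-- The orthogonal complement of a subgroup with respect to the form. -/
def orthU (p : ℕ) {g : ℕ} (e : Fin g → ℕ)
    (S : AddSubgroup (∀ i, ZMod (p ^ e i) × ZMod (p ^ e i))) :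
    AddSubgroup (∀ i, ZMod (p ^ e i) × ZMod (p ^ e i)) where
  carrier := {z | ∀ y ∈ S, totalForm p e z y = 0}
  zero_mem' := by
    intro y _
    unfold totalForm
    refine Finset.sum_eq_zero fun i _ => ?_
    have h0 : (0 : ∀ i, ZMod (p ^ e i) × ZMod (p ^ e i)) i = 0 := rfl
    rw [h0, uForm_zero_left]
  add_mem' := by
    intro a b ha hb y hy
    have hsum : totalForm p e (a + b) y = totalForm p e a y + totalForm p e b y := by
      unfold totalForm
      rw [← Finset.sum_add_distrib]
      refine Finset.sum_congr rfl fun i _ => ?_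
      have h0 : (a + b) i = a i + b i := rfl
      rw [h0, uForm_add_left]
    rw [hsum, ha y hy, hb y hy, add_zero]
  neg_mem' := by
    intro a ha y hy
    have hsum : totalForm p e (-a) y = - totalForm p e a y := by
      unfold totalForm
      rw [← Finset.sum_neg_distrib]
      refine Finset.sum_congr rfl fun i _ => ?_
      have h0 : (-a) i = -(a i) := rfl
      rw [h0, uForm_neg_left]
    rw [hsum, ha y hy, neg_zero]

/-- A splitting element: `x` of order `d` lies in a subgroup `D' ≅ (ℤ/d)²` with
`D = D' ⊕ D'^⊥`. -/
def IsSplitElemU (p : ℕ) {g : ℕ} (e : Fin g → ℕ)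
    (x : ∀ i, ZMod (p ^ e i) × ZMod (p ^ e i)) : Prop :=
  ∃ S : AddSubgroup (∀ i, ZMod (p ^ e i) × ZMod (p ^ e i)), x ∈ S ∧
    Nonempty (S ≃+ (ZMod (addOrderOf x) × ZMod (addOrderOf x))) ∧
    S ⊔ orthU p e S = ⊤ ∧ S ⊓ orthU p e S = ⊥

lemma uHom_intCast (n : ℕ) (m : ℤ) :
    uHom n (m : ZMod n) = m • ((((n : ℚ))⁻¹ : ℚ) : AddCircle (1 : ℚ)) := by
  unfold uHom
  rw [ZMod.lift_coe]
  rfl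

lemma uHom_eq_zero (n : ℕ) (hn : 0 < n) (k : ZMod n) (h : uHom n k = 0) : k = 0 := by
  obtain ⟨m, rfl⟩ := ZMod.intCast_surjective k
  rw [uHom_intCast] at h
  have : Fact ((0 : ℚ) < 1) := ⟨one_pos⟩
  have h2 := AddCircle.addOrderOf_period_div (p := (1 : ℚ)) hn
  rw [one_div] at h2
  rw [← addOrderOf_dvd_iff_zsmul_eq_zero, h2] at h
  exact (ZMod.intCast_zmod_eq_zero_iff_dvd _ _).2 h

lemma exists_uHom (n : ℕ) (hn : 0 < n) (a : AddCircle (1 : ℚ)) (h : n • a = 0) :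
    ∃ k, uHom n k = a := by
  obtain ⟨q, rfl⟩ := QuotientAddGroup.mk_surjective a
  have h1 : ((n • q : ℚ) : AddCircle (1 : ℚ)) = 0 := h
  obtain ⟨m, hm⟩ := (AddCircle.coe_eq_zero_iff (1 : ℚ)).1 h1
  refine ⟨(m : ZMod n), ?_⟩
  rw [uHom_intCast]
  have h2 : q = m • ((n : ℚ))⁻¹ := by
    have : (n : ℚ) ≠ 0 := by positivity
    simp only [zsmul_eq_mul, nsmul_eq_mul, mul_one] at hm ⊢
    field_simp
    linarith
  rw [h2]
  rfl

/-- The abstract splitting construction. -/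
lemma exists_split {D : Type*} [AddCommGroup D] (B : D →+ D →+ AddCircle (1 : ℚ))
    (halt : ∀ z, B z z = 0) (hanti : ∀ z w, B z w = - B w z) (d : ℕ) (hd : 0 < d) (x y : D)
    (hx : d • x = 0) (hy : d • y = 0) (hxy : B x y = uHom d 1) :
    ∃ S : AddSubgroup D, x ∈ S ∧ Nonempty (S ≃+ (ZMod d × ZMod d)) ∧
      (∀ z, ∃ s ∈ S, ∀ w ∈ S, B (z - s) w = 0) ∧
      (∀ s ∈ S, (∀ w ∈ S, B s w = 0) → s = 0) := by
  let lx : ZMod d →+ D := ZMod.lift d ⟨zmultiplesHom _ x, by simpa using hx⟩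
  let ly : ZMod d →+ D := ZMod.lift d ⟨zmultiplesHom _ y, by simpa using hy⟩
  have hlx : ∀ m : ℤ, lx m = m • x := fun m => by simp [lx]
  have hly : ∀ m : ℤ, ly m = m • y := fun m => by simp [ly]
  have hu : ∀ m : ℤ, m • uHom d 1 = uHom d m := fun m => by
    rw [← map_zsmul]; simp
  have hyx : B y x = - uHom d 1 := by rw [hanti, hxy]
  have Blxy : ∀ m, B (lx m) y = uHom d m := fun m => by
    obtain ⟨m, rfl⟩ := ZMod.intCast_surjective m
    rw [hlx, map_zsmul, AddMonoidHom.zsmul_apply, hxy, hu]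
  have Blxx : ∀ m, B (lx m) x = 0 := fun m => by
    obtain ⟨m, rfl⟩ := ZMod.intCast_surjective m
    rw [hlx, map_zsmul, AddMonoidHom.zsmul_apply, halt, smul_zero]
  have Blyy : ∀ m, B (ly m) y = 0 := fun m => by
    obtain ⟨m, rfl⟩ := ZMod.intCast_surjective m
    rw [hly, map_zsmul, AddMonoidHom.zsmul_apply, halt, smul_zero]
  have Blyx : ∀ m, B (ly m) x = - uHom d m := fun m => by
    obtain ⟨m, rfl⟩ := ZMod.intCast_surjective m
    rw [hly, map_zsmul, AddMonoidHom.zsmul_apply, hyx, smul_neg, hu]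
  let φ : ZMod d × ZMod d →+ D := lx.coprod ly
  have hφ : ∀ q, φ q = lx q.1 + ly q.2 := fun q => rfl
  have Bφy : ∀ q, B (φ q) y = uHom d q.1 := fun q => by
    rw [hφ, map_add, AddMonoidHom.add_apply, Blxy, Blyy, add_zero]
  have Bφx : ∀ q, B (φ q) x = - uHom d q.2 := fun q => by
    rw [hφ, map_add, AddMonoidHom.add_apply, Blxx, Blyx, zero_add]
  have key : ∀ q, B (φ q) x = 0 → B (φ q) y = 0 → q = 0 := fun q h1 h2 => by
    rw [Bφx, neg_eq_zero] at h1
    rw [Bφy] at h2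
    exact Prod.ext (uHom_eq_zero d hd _ h2) (uHom_eq_zero d hd _ h1)
  have hinj : Function.Injective φ := by
    rw [injective_iff_map_eq_zero]
    intro q hq
    apply key <;> rw [hq] <;> simp
  have hxS : x ∈ φ.range := ⟨(((1 : ℤ) : ZMod d), ((0 : ℤ) : ZMod d)), by
    rw [hφ, hlx, hly]; simp⟩
  have hyS : y ∈ φ.range := ⟨(((0 : ℤ) : ZMod d), ((1 : ℤ) : ZMod d)), by
    rw [hφ, hlx, hly]; simp⟩
  refine ⟨φ.range, hxS, ⟨(AddMonoidHom.ofInjective hinj).symm⟩, ?_, ?_⟩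
  · intro z
    obtain ⟨a, ha⟩ := exists_uHom d hd (B z y) (by rw [← map_nsmul, hy, map_zero])
    obtain ⟨b, hb⟩ := exists_uHom d hd (B z x) (by rw [← map_nsmul, hx, map_zero])
    refine ⟨φ (a, -b), ⟨_, rfl⟩, ?_⟩
    have h1 : B (z - φ (a, -b)) y = 0 := by
      rw [map_sub, AddMonoidHom.sub_apply, Bφy, ha, sub_self]
    have h2 : B (z - φ (a, -b)) x = 0 := by
      rw [map_sub, AddMonoidHom.sub_apply, Bφx, map_neg, neg_neg, hb, sub_self]
    rintro w ⟨⟨m, n⟩, rfl⟩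
    obtain ⟨m, rfl⟩ := ZMod.intCast_surjective m
    obtain ⟨n, rfl⟩ := ZMod.intCast_surjective n
    rw [hφ ((m : ZMod d), (n : ZMod d)), hlx, hly, map_add, map_zsmul, map_zsmul, h1, h2]
    simp
  · rintro _ ⟨q, rfl⟩ h
    rw [key q (h _ hxS) (h _ hyS), map_zero]

lemma uForm_anti (n : ℕ) (x y : ZMod n × ZMod n) : uForm n x y = - uForm n y x := by
  unfold uForm
  rw [← map_neg]
  congr 1
  ring

lemma uForm_self (n : ℕ) (x : ZMod n × ZMod n) : uForm n x x = 0 := by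
  unfold uForm
  rw [mul_comm, sub_self, map_zero]

lemma totalForm_anti (p : ℕ) {g : ℕ} (e : Fin g → ℕ)
    (x y : ∀ i, ZMod (p ^ e i) × ZMod (p ^ e i)) :
    totalForm p e x y = - totalForm p e y x := by
  unfold totalForm
  rw [← Finset.sum_neg_distrib]
  exact Finset.sum_congr rfl fun i _ => uForm_anti _ _ _

lemma totalForm_add_left (p : ℕ) {g : ℕ} (e : Fin g → ℕ)
    (x x' y : ∀ i, ZMod (p ^ e i) × ZMod (p ^ e i)) :
    totalForm p e (x + x') y = totalForm p e x y + totalForm p e x' y := by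
  unfold totalForm
  rw [← Finset.sum_add_distrib]
  exact Finset.sum_congr rfl fun i _ => uForm_add_left _ _ _ _

lemma totalForm_add_right (p : ℕ) {g : ℕ} (e : Fin g → ℕ)
    (x y y' : ∀ i, ZMod (p ^ e i) × ZMod (p ^ e i)) :
    totalForm p e x (y + y') = totalForm p e x y + totalForm p e x y' := by
  rw [totalForm_anti, totalForm_add_left, totalForm_anti p e x y, totalForm_anti p e x y']
  abel

/-- The total form as a biadditive map. -/
def totalHom (p : ℕ) {g : ℕ} (e : Fin g → ℕ) :
    (∀ i, ZMod (p ^ e i) × ZMod (p ^ e i)) →+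
      (∀ i, ZMod (p ^ e i) × ZMod (p ^ e i)) →+ AddCircle (1 : ℚ) :=
  AddMonoidHom.mk' (fun x => AddMonoidHom.mk' (totalForm p e x) (totalForm_add_right p e x))
    (fun x x' => AddMonoidHom.ext fun y => totalForm_add_left p e x x' y)

lemma totalHom_apply (p : ℕ) {g : ℕ} (e : Fin g → ℕ)
    (x y : ∀ i, ZMod (p ^ e i) × ZMod (p ^ e i)) :
    totalHom p e x y = totalForm p e x y := rfl

lemma totalForm_single (p : ℕ) {g : ℕ} (e : Fin g → ℕ)
    (x : ∀ i, ZMod (p ^ e i) × ZMod (p ^ e i)) (i : Fin g)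
    (v : ZMod (p ^ e i) × ZMod (p ^ e i)) :
    totalForm p e x (Pi.single i v) = uForm (p ^ e i) (x i) v := by
  unfold totalForm
  rw [Finset.sum_eq_single i]
  · rw [Pi.single_eq_same]
  · intro j _ hj
    rw [Pi.single_eq_of_ne hj, uForm_anti, uForm_zero_left, neg_zero]
  · intro h
    exact absurd (Finset.mem_univ i) h

lemma nsmul_zmod_prod (n : ℕ) (v : ZMod n × ZMod n) : n • v = 0 := by
  ext <;> simp

lemma zmod_div (p : ℕ) (hp : p.Prime) (e k : ℕ) (hk : k + 1 < e) (a : ZMod (p ^ e))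
    (ha : p ^ (k + 1) • a = 0) : ∃ b : ZMod (p ^ e), p ^ k • a = p ^ (k + 1) • b := by
  obtain ⟨n, rfl⟩ : ∃ n : ℕ, (n : ZMod (p ^ e)) = a := by
    have : NeZero (p ^ e) := ⟨(pow_pos hp.pos _).ne'⟩
    exact ⟨a.val, ZMod.natCast_zmod_val a⟩
  obtain ⟨c, rfl⟩ := Nat.exists_eq_add_of_lt hk
  have h : ((p ^ (k + 1) * n : ℕ) : ZMod (p ^ (k + 1 + c + 1))) = 0 := by
    simpa [nsmul_eq_mul] using ha
  rw [ZMod.natCast_eq_zero_iff, show k + 1 + c + 1 = (k + 1) + (c + 1) by ring, pow_add] at h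
  obtain ⟨m, rfl⟩ := Nat.dvd_of_mul_dvd_mul_left (pow_pos hp.pos _) h
  refine ⟨((p ^ c * m : ℕ) : ZMod _), ?_⟩
  simp only [nsmul_eq_mul]
  push_cast
  ring

lemma zmod_unit (p : ℕ) (hp : p.Prime) (k : ℕ) (a : ZMod (p ^ (k + 1)))
    (ha : p ^ k • a ≠ 0) : IsUnit a := by
  obtain ⟨n, rfl⟩ : ∃ n : ℕ, (n : ZMod (p ^ (k + 1))) = a := by
    have : NeZero (p ^ (k + 1)) := ⟨(pow_pos hp.pos _).ne'⟩
    exact ⟨a.val, ZMod.natCast_zmod_val a⟩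
  rw [ZMod.isUnit_iff_coprime]
  refine Nat.Coprime.pow_right _ (Nat.Coprime.symm ((Nat.Prime.coprime_iff_not_dvd hp).2 ?_))
  rintro ⟨m, rfl⟩
  apply ha
  have : ((p ^ k * (p * m) : ℕ) : ZMod (p ^ (k + 1))) = 0 := by
    rw [ZMod.natCast_eq_zero_iff]
    exact ⟨m, by ring⟩
  simpa [nsmul_eq_mul] using this

lemma exists_dual (p : ℕ) (hp : p.Prime) (E k : ℕ) (hE : E = k + 1)
    (u : ZMod (p ^ E) × ZMod (p ^ E))
    (hu : p ^ k • u ≠ 0) : ∃ v, uForm (p ^ E) u v = uHom (p ^ E) 1 := by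
  subst hE
  by_cases h1 : p ^ k • u.1 = 0
  · have h2 : p ^ k • u.2 ≠ 0 := fun h2 => hu (Prod.ext h1 h2)
    obtain ⟨b, hb⟩ := (zmod_unit p hp k _ h2).exists_right_inv
    exact ⟨(-b, 0), by unfold uForm; congr 1; simp [hb]⟩
  · obtain ⟨b, hb⟩ := (zmod_unit p hp k _ h1).exists_right_inv
    exact ⟨(0, b), by unfold uForm; congr 1; simp [hb]⟩

/-- **Classification of splitting elements** (Proposition 3.4): a nonzero element
`x = Σᵢ xᵢ` of `𝒰(p^{e₁}) ⊕ ⋯ ⊕ 𝒰(p^{e_g})`, with `ord(xᵢ) = p^{fᵢ}` and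
`ord(x) = p^f = maxᵢ p^{fᵢ}`, is splitting iff there is an index `i` with
`fᵢ = f` and `fᵢ = eᵢ`. -/
theorem splitting_elements_of_p_discriminant_form
    (p : ℕ) (hp : p.Prime) (g : ℕ) (e : Fin g → ℕ) (hmono : Monotone e)
    (x : ∀ i, ZMod (p ^ e i) × ZMod (p ^ e i)) (hx : x ≠ 0)
    (f : Fin g → ℕ) (hf : ∀ i, addOrderOf (x i) = p ^ f i) :
    IsSplitElemU p e x ↔ ∃ i, (∀ j, f j ≤ f i) ∧ f i = e i := by
  have : Fact p.Prime := ⟨hp⟩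
  have hz : ∀ i n, p ^ n • x i = 0 ↔ f i ≤ n := fun i n => by
    rw [← addOrderOf_dvd_iff_nsmul_eq_zero, hf, Nat.pow_dvd_pow_iff_le_right hp.one_lt]
  have hnt : ∃ i, f i ≠ 0 := by
    by_contra! h
    apply hx
    funext i
    have := (hz i 0).2 (h i).le
    simpa using this
  obtain ⟨j0, hj0⟩ := hnt
  have : Nonempty (Fin g) := ⟨j0⟩
  obtain ⟨i0, hi0⟩ := Finite.exists_max f
  obtain ⟨k, hk⟩ : ∃ k, f i0 = k + 1 := Nat.exists_eq_succ_of_ne_zero (by have := hi0 j0; omega)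
  have hxk : ¬ p ^ k • x = 0 := fun h => by
    have := (hz i0 k).1 (congrFun h i0)
    omega
  have hxk1 : p ^ (k + 1) • x = 0 := by
    funext i
    exact (hz i (k + 1)).2 (hk ▸ hi0 i)
  have hord : addOrderOf x = p ^ (k + 1) := addOrderOf_eq_prime_pow hxk hxk1
  constructor
  · rintro ⟨S, hxS, ⟨φ⟩, hsup, hinf⟩
    by_contra! hcon
    have hSk : ∀ s ∈ S, p ^ (k + 1) • s = 0 := by
      intro s hs
      have h1 : p ^ (k + 1) • (⟨s, hs⟩ : S) = 0 := by
        apply φ.injective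
        rw [map_nsmul, map_zero, ← hord]
        ext <;> simp
      exact congrArg Subtype.val h1
    have hw : ∀ i, ∃ w : ZMod (p ^ e i) × ZMod (p ^ e i),
        p ^ k • x i = p ^ (k + 1) • w := by
      intro i
      by_cases hi : f i ≤ k
      · exact ⟨0, by rw [(hz i k).2 hi, smul_zero]⟩
      · have hfi : f i = k + 1 := by have := hi0 i; omega
        have hne := hcon i (fun j => by rw [hfi, ← hk]; exact hi0 j)
        have h0 : p ^ (k + 1) • x i = 0 := (hz i _).2 hfi.le
        have hle : f i ≤ e i := by
          rw [← hz]
          exact nsmul_zmod_prod _ _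
        obtain ⟨b, hb⟩ := zmod_div p hp (e i) k (by omega) (x i).1 (congrArg Prod.fst h0)
        obtain ⟨c, hc⟩ := zmod_div p hp (e i) k (by omega) (x i).2 (congrArg Prod.snd h0)
        exact ⟨(b, c), Prod.ext hb hc⟩
    choose w hw using hw
    have hmem : w ∈ S ⊔ orthU p e S := hsup ▸ AddSubgroup.mem_top _
    obtain ⟨s, hs, t, ht, hst⟩ := AddSubgroup.mem_sup.1 hmem
    have hxw : p ^ k • x = p ^ (k + 1) • t := by
      have : p ^ k • x = p ^ (k + 1) • w := funext hw
      rw [this, ← hst, smul_add, hSk s hs, zero_add]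
    apply hxk
    have : p ^ k • x ∈ S ⊓ orthU p e S :=
      ⟨S.nsmul_mem hxS _, hxw ▸ (orthU p e S).nsmul_mem ht _⟩
    rw [hinf] at this
    exact AddSubgroup.mem_bot.1 this
  · rintro ⟨i, hi, hie⟩
    have hfi : f i = k + 1 := le_antisymm (hk ▸ hi0 i) (hk ▸ hi i0)
    have hei : e i = k + 1 := hie ▸ hfi
    obtain ⟨v, hv⟩ := exists_dual p hp (e i) k hei (x i) (fun h => by
      have := (hz i k).1 h
      omega)
    have hd : addOrderOf x = p ^ e i := by rw [hord, hei]
    obtain ⟨S, h1, h2, h3, h4⟩ := exists_split (totalHom p e)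
      (fun z => by
        rw [totalHom_apply]
        exact Finset.sum_eq_zero fun j _ => uForm_self _ _)
      (fun z w => totalForm_anti p e z w) (p ^ e i) (pow_pos hp.pos _) x (Pi.single i v)
      (by rw [hei]; exact hxk1)
      (by
        rw [← Pi.single_smul]
        have : p ^ e i • v = 0 := by
          exact nsmul_zmod_prod _ _
        rw [this, Pi.single_zero])
      (by rw [totalHom_apply, totalForm_single, hv])
    refine ⟨S, h1, by rw [hd]; exact h2, ?_, ?_⟩
    · rw [eq_top_iff]
      intro z _
      obtain ⟨s, hs, hsw⟩ := h3 z
      exact AddSubgroup.mem_sup.2 ⟨s, hs, z - s, hsw, by abel⟩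
    · rw [eq_bot_iff]
      rintro s ⟨hs, hs'⟩
      exact AddSubgroup.mem_bot.2 (h4 s hs hs')

end
end

section
/- Let Λ be a symplectic lattice of type (d₁, …, d_g) with d₁ = d₂ = 1, i.e., Λ is isometric to U(d₁) ⊕ ⋯ ⊕ U(d_g) with dᵢ | d_{i+1} and d₁ = d₂ = 1. Then every primitive vector of Λ is splitting if and only if the integers d₃, d₄/d₃, …, d_g/d_{g−1} are square-free and pairwise coprime. -/
lemma aps_arith_mp {g : ℕ} (hg : 2 ≤ g) (dd : Fin g → ℕ)
    (hdvd : ∀ i j : Fin g, i ≤ j → dd i ∣ dd j)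
    (hsq : ∀ i, Squarefree (dd i)) :
    ((∀ i j : Fin g, 1 ≤ (i : ℕ) → (j : ℕ) = (i : ℕ) + 1 → Squarefree (dd j / dd i)) ∧
        (∀ i j i' j' : Fin g, 1 ≤ (i : ℕ) → (j : ℕ) = (i : ℕ) + 1 →
          1 ≤ (i' : ℕ) → (j' : ℕ) = (i' : ℕ) + 1 → i ≠ i' →
          Nat.Coprime (dd j / dd i) (dd j' / dd i'))) := by
  have key : ∀ i j i' j' : Fin g, (j : ℕ) = (i : ℕ) + 1 → (j' : ℕ) = (i' : ℕ) + 1 → i < i' →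
      Nat.Coprime (dd j / dd i) (dd j' / dd i') := by
    intro i j i' j' h1 h2 h3
    have hji : j ≤ i' := by rw [Fin.le_def]; rw [Fin.lt_def] at h3; omega
    have h4 : dd i ∣ dd j := hdvd i j (by rw [Fin.le_def]; omega)
    have h5 : dd i' ∣ dd j' := hdvd i' j' (by rw [Fin.le_def]; omega)
    have h6 : dd i' * (dd j' / dd i') = dd j' := Nat.mul_div_cancel' h5
    have h7 := hsq j'
    rw [← h6, Nat.squarefree_mul_iff] at h7
    exact h7.1.coprime_dvd_left ((Nat.div_dvd_of_dvd h4).trans (hdvd j i' hji))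
  refine ⟨?_, ?_⟩
  · intro i j _ h1
    have h4 : dd i ∣ dd j := hdvd i j (by rw [Fin.le_def]; omega)
    exact (hsq j).squarefree_of_dvd (Nat.div_dvd_of_dvd h4)
  · intro i j i' j' _ h1 _ h2 hne
    rcases lt_or_gt_of_ne hne with h | h
    · exact key i j i' j' h1 h2 h
    · exact (key i' j' i j h2 h1 h).symm

lemma aps_arith_mpr {g : ℕ} (hg : 2 ≤ g) (dd : Fin g → ℕ)
    (hdvd : ∀ i j : Fin g, i ≤ j → dd i ∣ dd j)
    (hd1 : ∀ i : Fin g, (i : ℕ) = 0 → dd i = 1) (hd2 : ∀ i : Fin g, (i : ℕ) = 1 → dd i = 1)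
    (h : ((∀ i j : Fin g, 1 ≤ (i : ℕ) → (j : ℕ) = (i : ℕ) + 1 → Squarefree (dd j / dd i)) ∧
        (∀ i j i' j' : Fin g, 1 ≤ (i : ℕ) → (j : ℕ) = (i : ℕ) + 1 →
          1 ≤ (i' : ℕ) → (j' : ℕ) = (i' : ℕ) + 1 → i ≠ i' →
          Nat.Coprime (dd j / dd i) (dd j' / dd i')))) :
    ∀ i, Squarefree (dd i) := by
  obtain ⟨hs, hc⟩ := h
  have key : ∀ n : ℕ, 1 ≤ n → ∀ hn : n < g, Squarefree (dd ⟨n, hn⟩) ∧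
      ∀ i j : Fin g, n ≤ (i : ℕ) → (j : ℕ) = (i : ℕ) + 1 →
        Nat.Coprime (dd ⟨n, hn⟩) (dd j / dd i) := by
    intro n hn1
    induction n, hn1 using Nat.le_induction with
    | base =>
      intro hn
      rw [hd2 ⟨1, hn⟩ rfl]
      exact ⟨squarefree_one, fun _ _ _ _ => Nat.coprime_one_left _⟩
    | succ n hn1 ih =>
      intro hn
      obtain ⟨h1, h2⟩ := ih (by omega)
      have h4 : dd ⟨n, by omega⟩ ∣ dd ⟨n + 1, hn⟩ := hdvd _ _ (by rw [Fin.le_def]; simp)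
      have h6 := Nat.mul_div_cancel' h4
      rw [← h6]
      refine ⟨?_, ?_⟩
      · rw [Nat.squarefree_mul_iff]
        exact ⟨h2 _ _ le_rfl rfl, h1, hs _ _ hn1 rfl⟩
      · intro i j hi hj
        refine Nat.Coprime.mul_left (h2 i j (by omega) hj) ?_
        refine hc _ _ _ _ hn1 rfl (by omega) hj ?_
        intro he
        rw [← he] at hi
        simp at hi
  intro i
  by_cases h0 : (i : ℕ) = 0
  · rw [hd1 i h0]; exact squarefree_one
  · exact (key i (by omega) i.2).1

section aps
variable {V : Type} [AddCommGroup V] [Module ℚ V] {B : V →ₗ[ℚ] V →ₗ[ℚ] ℚ}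
  {L : Submodule ℤ V} {g : ℕ} {dd : Fin g → ℕ} {E F : Fin g → V}

lemma aps_zl (B : V →ₗ[ℚ] V →ₗ[ℚ] ℚ) (n : ℤ) (x y : V) : B (n • x) y = n * B x y := by
  rw [← Int.cast_smul_eq_zsmul ℚ, map_smul, LinearMap.smul_apply, smul_eq_mul]

lemma aps_zr (B : V →ₗ[ℚ] V →ₗ[ℚ] ℚ) (n : ℤ) (x y : V) : B x (n • y) = n * B x y := by
  rw [← Int.cast_smul_eq_zsmul ℚ, map_smul, smul_eq_mul]

lemma aps_coord (hdec : OrthoDecompType B L dd E F) {x : V} (hx : x ∈ L) :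
    ∃ a b : Fin g → ℤ, x = ∑ i, a i • E i + ∑ i, b i • F i := by
  obtain ⟨_, _, _, _, hs⟩ := hdec
  rw [← hs, Submodule.span_union, Submodule.mem_sup] at hx
  obtain ⟨y, hy, z, hz, rfl⟩ := hx
  obtain ⟨a, rfl⟩ := (Submodule.mem_span_range_iff_exists_fun ℤ).1 hy
  obtain ⟨b, rfl⟩ := (Submodule.mem_span_range_iff_exists_fun ℤ).1 hz
  exact ⟨a, b, rfl⟩

lemma aps_BF (halt : ∀ v, B v v = 0) (hdec : OrthoDecompType B L dd E F) (a b : Fin g → ℤ)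
    (k : Fin g) : B (∑ i, a i • E i + ∑ i, b i • F i) (F k) = a k * dd k := by
  obtain ⟨_, _, h1, h2, hs⟩ := hdec
  simp only [map_add, map_sum, LinearMap.add_apply, LinearMap.sum_apply, aps_zl]
  rw [Finset.sum_eq_single k, Finset.sum_eq_zero, h1, add_zero]
  · intro i _
    by_cases h : i = k
    · rw [h, halt, mul_zero]
    · rw [(h2 i k h).2.2, mul_zero]
  · intro i _ h
    rw [(h2 i k h).2.1, mul_zero]
  · simp

lemma aps_BE (halt : ∀ v, B v v = 0) (hdec : OrthoDecompType B L dd E F) (a b : Fin g → ℤ)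
    (k : Fin g) : B (∑ i, a i • E i + ∑ i, b i • F i) (E k) = -(b k * dd k) := by
  obtain ⟨_, _, h1, h2, hs⟩ := hdec
  simp only [map_add, map_sum, LinearMap.add_apply, LinearMap.sum_apply, aps_zl]
  rw [Finset.sum_eq_zero, Finset.sum_eq_single k, bilin_antisymm B halt, h1]
  · ring
  · intro i _ h
    rw [bilin_antisymm B halt, (h2 k i (Ne.symm h)).2.1]; ring
  · simp
  · intro i _
    by_cases h : i = k
    · rw [h, halt, mul_zero]
    · rw [(h2 i k h).1, mul_zero]

lemma aps_dF (halt : ∀ v, B v v = 0) (hdec : OrthoDecompType B L dd E F) {x : V} (hx : x ∈ L)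
    (k : Fin g) : ∃ n : ℤ, B x (F k) = n * dd k := by
  obtain ⟨a, b, rfl⟩ := aps_coord hdec hx
  exact ⟨_, aps_BF halt hdec a b k⟩

lemma aps_dE (halt : ∀ v, B v v = 0) (hdec : OrthoDecompType B L dd E F) {x : V} (hx : x ∈ L)
    (k : Fin g) : ∃ n : ℤ, B x (E k) = n * dd k := by
  obtain ⟨a, b, rfl⟩ := aps_coord hdec hx
  exact ⟨-b k, by rw [aps_BE halt hdec a b k]; push_cast; ring⟩

/-- Criterion for splitting. -/
lemma aps_split (halt : ∀ v, B v v = 0) {v w : V} (hv : v ∈ L) (hw : w ∈ L) {d : ℤ}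
    (hd : d ≠ 0) (hvd : ∀ x ∈ L, ∃ n : ℤ, B v x = n * d)
    (hwd : ∀ x ∈ L, ∃ n : ℤ, B w x = n * d) (hvw : B v w = d) : IsSplitVec B L v := by
  have hwv : B w v = -d := by rw [bilin_antisymm B halt, hvw]
  have hdq : (d : ℚ) ≠ 0 := by exact_mod_cast hd
  have hle : Submodule.span ℤ {v, w} ≤ L := by
    rw [Submodule.span_le]
    rintro x (rfl | rfl)
    · exact hv
    · exact hw
  refine ⟨Submodule.span ℤ {v, w}, Submodule.subset_span (by simp), hle, ?_, ?_, ?_⟩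
  · have hli : LinearIndependent ℤ ![v, w] := by
      rw [LinearIndependent.pair_iff]
      intro s t h
      have h1 : B (s • v + t • w) w = 0 := by rw [h]; simp
      have h2 : B (s • v + t • w) v = 0 := by rw [h]; simp
      simp only [map_add, LinearMap.add_apply, aps_zl, halt, hvw, hwv] at h1 h2
      constructor
      · have : (s : ℚ) = 0 := by
          have : (s : ℚ) * d = 0 := by linarith
          exact (mul_eq_zero.1 this).resolve_right hdq
        exact_mod_cast this
      · have : (t : ℚ) = 0 := by
          have : (t : ℚ) * d = 0 := by linarith
          exact (mul_eq_zero.1 this).resolve_right hdq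
        exact_mod_cast this
    have := finrank_span_eq_card hli
    rwa [Matrix.range_cons_cons_empty, Fintype.card_fin] at this
  · apply le_antisymm
    · exact sup_le hle (fun z hz => hz.1)
    · intro x hx
      obtain ⟨t, ht⟩ := hvd x hx
      obtain ⟨s, hs⟩ := hwd x hx
      have hs' : B x w = -(s * d) := by rw [bilin_antisymm B halt, hs]
      have ht' : B x v = -(t * d) := by rw [bilin_antisymm B halt, ht]
      have hy : (-s) • v + t • w ∈ Submodule.span ℤ {v, w} :=
        Submodule.mem_span_pair.2 ⟨-s, t, rfl⟩
      rw [Submodule.mem_sup]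
      refine ⟨_, hy, x - ((-s) • v + t • w), ⟨L.sub_mem hx (hle hy), ?_⟩, by abel⟩
      intro y hy
      obtain ⟨p, q, rfl⟩ := Submodule.mem_span_pair.1 hy
      simp only [map_add, map_sub, LinearMap.add_apply, LinearMap.sub_apply, aps_zl, aps_zr,
        halt, hvw, hwv, hs', ht']
      push_cast; ring
  · rw [eq_bot_iff]
    rintro y ⟨hy, hy2⟩
    have hv2 := hy2.2 v (Submodule.subset_span (by simp))
    have hw2 := hy2.2 w (Submodule.subset_span (by simp))
    obtain ⟨p, q, rfl⟩ := Submodule.mem_span_pair.1 hy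
    simp only [map_add, LinearMap.add_apply, aps_zl, halt, hvw, hwv] at hv2 hw2
    have hp : (p : ℚ) = 0 := by
      have : (p : ℚ) * d = 0 := by linarith
      exact (mul_eq_zero.1 this).resolve_right hdq
    have hq : (q : ℚ) = 0 := by
      have : (q : ℚ) * d = 0 := by linarith
      exact (mul_eq_zero.1 this).resolve_right hdq
    have hp' : p = 0 := by exact_mod_cast hp
    have hq' : q = 0 := by exact_mod_cast hq
    simp [hp', hq']

lemma aps_prim {v : V} (hv0 : v ≠ 0) (hp : IsPrimitive L v) {p : ℤ} {u : V} (hu : u ∈ L)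
    (h : v = p • u) : IsUnit p := by
  have hp0 : p ≠ 0 := by rintro rfl; simp at h; exact hv0 h
  have hmem : u ∈ (Submodule.span ℚ {v}).restrictScalars ℤ ⊓ L := by
    refine ⟨?_, hu⟩
    show u ∈ Submodule.span ℚ {v}
    rw [Submodule.mem_span_singleton]
    refine ⟨(p : ℚ)⁻¹, ?_⟩
    rw [h, ← Int.cast_smul_eq_zsmul ℚ, smul_smul, inv_mul_cancel₀ (by exact_mod_cast hp0), one_smul]
  rw [hp.2, Submodule.mem_span_singleton] at hmem
  obtain ⟨n, hn⟩ := hmem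
  rw [← hn, smul_smul, ← Int.cast_smul_eq_zsmul ℚ] at h
  have h2 : ((1 : ℚ) - ((p * n : ℤ) : ℚ)) • v = 0 := by
    rw [sub_smul, one_smul, ← h, sub_self]
  rcases smul_eq_zero.1 h2 with h3 | h3
  · have : p * n = 1 := by
      have : ((p * n : ℤ) : ℚ) = 1 := by linarith
      exact_mod_cast this
    exact IsUnit.of_mul_eq_one _ this
  · exact absurd h3 hv0

lemma aps_forward (halt : ∀ v, B v v = 0) (hpos : ∀ i, 0 < dd i)
    (hdec : OrthoDecompType B L dd E F) (hsq : ∀ i, Squarefree (dd i))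
    {v : V} (hv0 : v ≠ 0) (hp : IsPrimitive L v) : IsSplitVec B L v := by
  classical
  obtain ⟨a, b, hab⟩ := aps_coord hdec hp.1
  have hvF : ∀ k, B v (F k) = a k * dd k := fun k => by rw [hab]; exact aps_BF halt hdec a b k
  have hvE : ∀ k, B v (E k) = -(b k * dd k) := fun k => by rw [hab]; exact aps_BE halt hdec a b k
  set c : Fin g → ℕ := fun i => Int.gcd (a i) (b i) with hc
  set d : ℕ := Finset.univ.gcd (fun i => dd i * c i) with hd
  have hdd : ∀ i, d ∣ dd i * c i := fun i => Finset.gcd_dvd (Finset.mem_univ i)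
  have hda : ∀ i, (d : ℤ) ∣ dd i * a i := fun i =>
    (Int.natCast_dvd_natCast.2 (hdd i)).trans
      (by push_cast; exact mul_dvd_mul_left _ (Int.gcd_dvd_left ..))
  have hdb : ∀ i, (d : ℤ) ∣ dd i * b i := fun i =>
    (Int.natCast_dvd_natCast.2 (hdd i)).trans
      (by push_cast; exact mul_dvd_mul_left _ (Int.gcd_dvd_right ..))
  -- no prime divides all coordinates
  have hprim : ∀ p : ℕ, p.Prime → ∃ i, ¬ p ∣ c i := by
    intro p hpp
    by_contra! hcon
    have ha : ∀ i, (p : ℤ) ∣ a i := fun i =>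
      (Int.natCast_dvd_natCast.2 (hcon i)).trans (Int.gcd_dvd_left ..)
    have hb : ∀ i, (p : ℤ) ∣ b i := fun i =>
      (Int.natCast_dvd_natCast.2 (hcon i)).trans (Int.gcd_dvd_right ..)
    choose a' ha' using ha
    choose b' hb' using hb
    have hu : ∑ i, a' i • E i + ∑ i, b' i • F i ∈ L :=
      L.add_mem (L.sum_mem fun i _ => L.smul_mem _ (hdec.1 i))
        (L.sum_mem fun i _ => L.smul_mem _ (hdec.2.1 i))
    have := aps_prim hv0 hp (p := p) hu (by
      rw [hab]; simp only [smul_add, Finset.smul_sum, smul_smul, ha', hb'])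
    rw [Int.isUnit_iff_natAbs_eq] at this
    exact hpp.one_lt.ne' (by simpa using this)
  have hd0 : d ≠ 0 := by
    intro h0
    obtain ⟨i, hi⟩ := hprim 2 Nat.prime_two
    have := hdd i
    rw [h0, zero_dvd_iff] at this
    rcases Nat.mul_eq_zero.1 this with h | h
    · exact (hpos i).ne' h
    · exact hi (by rw [h]; exact dvd_zero _)
  have hvd : ∀ x ∈ L, ∃ n : ℤ, B v x = n * (d : ℤ) := by
    intro x hx
    obtain ⟨s, t, rfl⟩ := aps_coord hdec hx
    choose a' ha' using hda
    choose b' hb' using hdb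
    refine ⟨∑ i, s i * (-b' i) + ∑ i, t i * a' i, ?_⟩
    simp only [map_add, map_sum, aps_zr, hvF, hvE]
    push_cast
    rw [add_mul, Finset.sum_mul, Finset.sum_mul]
    congr 1
    · refine Finset.sum_congr rfl fun i _ => ?_
      have : ((dd i : ℚ) * b i) = d * b' i := by exact_mod_cast hb' i
      linear_combination (-(s i : ℚ)) * this
    · refine Finset.sum_congr rfl fun i _ => ?_
      have : ((dd i : ℚ) * a i) = d * a' i := by exact_mod_cast ha' i
      linear_combination ((t i : ℚ)) * this
  let K : Submodule ℤ ℤ :=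
    { carrier := {n | ∃ w ∈ L, (∀ x ∈ L, ∃ m : ℤ, B w x = m * (d : ℤ)) ∧ B v w = n * (d : ℤ)}
      zero_mem' := ⟨0, L.zero_mem, fun x _ => ⟨0, by simp⟩, by simp⟩
      add_mem' := by
        rintro n m ⟨w, hw, h1, h2⟩ ⟨w', hw', h1', h2'⟩
        refine ⟨w + w', L.add_mem hw hw', ?_, ?_⟩
        · intro x hx
          obtain ⟨r, hr⟩ := h1 x hx
          obtain ⟨r', hr'⟩ := h1' x hx
          exact ⟨r + r', by rw [map_add, LinearMap.add_apply, hr, hr']; push_cast; ring⟩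
        · rw [map_add, h2, h2']; push_cast; ring
      smul_mem' := by
        rintro c n ⟨w, hw, h1, h2⟩
        refine ⟨c • w, L.smul_mem c hw, ?_, ?_⟩
        · intro x hx
          obtain ⟨r, hr⟩ := h1 x hx
          exact ⟨c * r, by rw [aps_zl, hr]; push_cast; ring⟩
        · rw [aps_zr, h2, smul_eq_mul]; push_cast; ring }
  -- elements of K
  have hK : ∀ i, ((dd i / Nat.gcd d (dd i) : ℕ) : ℤ) * a i ∈ K ∧
      ((dd i / Nat.gcd d (dd i) : ℕ) : ℤ) * b i ∈ K := by
    intro i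
    obtain ⟨m, hm⟩ := Nat.gcd_dvd_left d (dd i)
    obtain ⟨r, hr⟩ := Nat.gcd_dvd_right d (dd i)
    have hgpos : 0 < Nat.gcd d (dd i) := Nat.gcd_pos_of_pos_right _ (hpos i)
    have hrr : dd i / Nat.gcd d (dd i) = r :=
      Nat.div_eq_of_eq_mul_right hgpos hr
    have hmr : m * dd i = d * r := by
      calc m * dd i = m * (Nat.gcd d (dd i) * r) := by rw [← hr]
        _ = (Nat.gcd d (dd i) * m) * r := by ring
        _ = d * r := by rw [← hm]
    have hmrq : (m : ℚ) * dd i = d * r := by exact_mod_cast hmr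
    rw [hrr]
    constructor
    · refine ⟨(m : ℤ) • F i, L.smul_mem _ (hdec.2.1 i), ?_, ?_⟩
      · intro x hx
        obtain ⟨n, hn⟩ := aps_dF halt hdec hx i
        refine ⟨-(n * r), ?_⟩
        rw [aps_zl, bilin_antisymm B halt, hn]
        push_cast
        linear_combination (-(n : ℚ)) * hmrq
      · rw [aps_zr, hvF]
        push_cast
        linear_combination (a i : ℚ) * hmrq
    · refine ⟨(-m : ℤ) • E i, L.smul_mem _ (hdec.1 i), ?_, ?_⟩
      · intro x hx
        obtain ⟨n, hn⟩ := aps_dE halt hdec hx i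
        refine ⟨n * r, ?_⟩
        rw [aps_zl, bilin_antisymm B halt, hn]
        push_cast
        linear_combination ((n : ℚ)) * hmrq
      · rw [aps_zr, hvE]
        push_cast
        linear_combination (b i : ℚ) * hmrq
  have h1K : (1 : ℤ) ∈ K := by
    by_contra hcon
    set n := Submodule.IsPrincipal.generator K with hn
    have hnd : ∀ k ∈ K, n ∣ k := fun k hk =>
      (Submodule.IsPrincipal.mem_iff_generator_dvd K).1 hk
    have hn1 : n.natAbs ≠ 1 := by
      intro h
      apply hcon
      rw [Submodule.IsPrincipal.mem_iff_generator_dvd K]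
      exact (Int.isUnit_iff_natAbs_eq.2 h).dvd
    obtain ⟨p, hpp, hpn⟩ := Nat.exists_prime_and_dvd hn1
    have hpK : ∀ k ∈ K, (p : ℤ) ∣ k := fun k hk => (Int.natCast_dvd.2 hpn).trans (hnd k hk)
    have hpc : ∀ i, p ∣ (dd i / Nat.gcd d (dd i)) * c i := by
      intro i
      have h1 := hpK _ (hK i).1
      have h2 := hpK _ (hK i).2
      have h3 := Int.dvd_coe_gcd h1 h2
      rw [Int.gcd_mul_left] at h3
      exact_mod_cast h3
    obtain ⟨i, hi⟩ := hprim p hpp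
    have h1 : p ∣ dd i / Nat.gcd d (dd i) := (hpp.dvd_mul.1 (hpc i)).resolve_right hi
    have h2 : Nat.gcd d (dd i) * (dd i / Nat.gcd d (dd i)) = dd i :=
      Nat.mul_div_cancel' (Nat.gcd_dvd_right _ _)
    have h3 := hsq i
    rw [← h2, Nat.squarefree_mul_iff] at h3
    have hpi : p ∣ dd i := h1.trans (Dvd.intro_left _ h2)
    have hpd : ¬ p ∣ d := by
      intro hpd
      exact Nat.not_coprime_of_dvd_of_dvd hpp.one_lt (Nat.dvd_gcd hpd hpi) h1 h3.1
    apply hpd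
    refine Finset.dvd_gcd fun j _ => (hpc j).trans ?_
    exact mul_dvd_mul_right (Nat.div_dvd_of_dvd (Nat.gcd_dvd_right _ _)) _
  obtain ⟨w, hw, hw1, hw2⟩ := h1K
  exact aps_split halt hp.1 hw (d := (d : ℤ)) (by exact_mod_cast hd0) hvd hw1
    (by rw [hw2]; push_cast; ring)

lemma aps_backward (halt : ∀ v, B v v = 0) (hfg : L.FG)
    (hint : ∀ x ∈ L, ∀ y ∈ L, ∃ n : ℤ, B x y = (n : ℚ)) (hpos : ∀ i, 0 < dd i)
    (hdec : OrthoDecompType B L dd E F) (i0 : Fin g) (hi0 : dd i0 = 1)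
    (h : ∀ v : V, v ≠ 0 → IsPrimitive L v → IsSplitVec B L v) (k : Fin g) :
    Squarefree (dd k) := by
  rw [Nat.squarefree_iff_prime_squarefree]
  intro p hp hpk
  have hk0 : i0 ≠ k := by
    rintro rfl
    rw [hi0] at hpk
    have := Nat.le_of_dvd one_pos hpk
    nlinarith [hp.two_le]
  have hdk : (dd k : ℚ) ≠ 0 := by exact_mod_cast (hpos k).ne'
  obtain ⟨q, hq⟩ := hpk
  set v : V := (p : ℤ) • E i0 + E k with hv
  have hvL : v ∈ L := L.add_mem (L.smul_mem _ (hdec.1 _)) (hdec.1 _)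
  have hvk : B v (F k) = dd k := by
    rw [hv, map_add, LinearMap.add_apply, aps_zl, (hdec.2.2.2.1 i0 k hk0).2.1, hdec.2.2.1]; ring
  have hv0i : B v (F i0) = p := by
    rw [hv, map_add, LinearMap.add_apply, aps_zl, (hdec.2.2.2.1 k i0 hk0.symm).2.1, hdec.2.2.1, hi0]
    push_cast; ring
  have hv0 : v ≠ 0 := by
    intro h0
    rw [h0] at hvk
    simp at hvk
    exact (hpos k).ne' (by exact_mod_cast hvk.symm)
  have hprim : IsPrimitive L v := by
    refine ⟨hvL, le_antisymm ?_ ?_⟩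
    · rintro x ⟨hx1, hx2⟩
      have hx1' : x ∈ Submodule.span ℚ {v} := hx1
      obtain ⟨t, rfl⟩ := Submodule.mem_span_singleton.1 hx1'
      obtain ⟨n, hn⟩ := aps_dF halt hdec hx2 k
      rw [map_smul, LinearMap.smul_apply, hvk, smul_eq_mul] at hn
      have : t = n := mul_right_cancel₀ hdk hn
      rw [Submodule.mem_span_singleton]
      exact ⟨n, by rw [this, Int.cast_smul_eq_zsmul]⟩
    · rw [Submodule.span_le]
      rintro x rfl
      exact ⟨Submodule.mem_span_singleton_self _, hvL⟩
  obtain ⟨L₁, hvL₁, hle, hrank, hsup, -⟩ := h v hv0 hprim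
  haveI : Module.Finite ℤ L := Module.Finite.iff_fg.2 hfg
  haveI : IsNoetherian ℤ L := inferInstance
  haveI : Module.Finite ℤ L₁ := Module.Finite.of_injective (Submodule.inclusion hle)
    (Submodule.inclusion_injective hle)
  haveI : IsAddTorsionFree V := IsAddTorsionFree.of_module_rat V
  haveI : Module.Free ℤ L₁ := inferInstance
  let bs := Module.finBasisOfFinrankEq ℤ L₁ hrank
  set e : V := (bs 0 : V) with he
  set f : V := (bs 1 : V) with hf
  have heL : e ∈ L := hle (bs 0).2
  have hfL : f ∈ L := hle (bs 1).2
  have hrep : ∀ y ∈ L₁, ∃ s t : ℤ, y = s • e + t • f := by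
    intro y hy
    have := bs.sum_repr ⟨y, hy⟩
    rw [Fin.sum_univ_two] at this
    exact ⟨_, _, (congrArg Subtype.val this).symm⟩
  have hproj : ∀ x ∈ L, ∃ l ∈ L₁, ∀ y ∈ L₁, B x y = B l y := by
    intro x hx
    rw [← hsup, Submodule.mem_sup] at hx
    obtain ⟨l, hl, z, hz, rfl⟩ := hx
    exact ⟨l, hl, fun y hy => by rw [map_add, LinearMap.add_apply, hz.2 y hy, add_zero]⟩
  obtain ⟨m, hm⟩ := hint e heL f hfL
  have hfe : B f e = -m := by rw [bilin_antisymm B halt, hm]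
  have hpair : ∀ x ∈ L, ∀ y ∈ L₁, ∃ n : ℤ, B x y = n * m := by
    intro x hx y hy
    obtain ⟨l, hl, hlx⟩ := hproj x hx
    rw [hlx y hy]
    obtain ⟨s, t, rfl⟩ := hrep l hl
    obtain ⟨s', t', rfl⟩ := hrep y hy
    refine ⟨s * t' - t * s', ?_⟩
    simp only [map_add, LinearMap.add_apply, aps_zl, aps_zr, halt, hm, hfe]
    push_cast; ring
  -- everything pairs with v in pℤ
  have hvp : ∀ x ∈ L, ∃ n : ℤ, B v x = n * p := by
    intro x hx
    obtain ⟨r, hr⟩ := aps_dE halt hdec hx k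
    obtain ⟨r', hr'⟩ := aps_dE halt hdec hx i0
    refine ⟨-r' - r * p * q, ?_⟩
    rw [bilin_antisymm B halt, hv, map_add, aps_zr, hr, hr', hi0, hq]
    push_cast; ring
  have hpm : (p : ℤ) ∣ m := by
    by_contra hcon
    obtain ⟨s, t, hst⟩ := hrep v hvL₁
    have hpz : Prime (p : ℤ) := Nat.prime_iff_prime_int.1 hp
    have hs : (p : ℤ) ∣ s := by
      obtain ⟨n, hn⟩ := hvp f hfL
      rw [hst] at hn
      simp only [map_add, LinearMap.add_apply, aps_zl, halt, hm] at hn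
      have : s * m = n * p := by
        have : (s : ℚ) * m = n * p := by linarith
        exact_mod_cast this
      exact (hpz.dvd_or_dvd (Dvd.intro_left _ this.symm)).resolve_right hcon
    have ht : (p : ℤ) ∣ t := by
      obtain ⟨n, hn⟩ := hvp e heL
      rw [hst] at hn
      simp only [map_add, LinearMap.add_apply, aps_zl, halt, hfe] at hn
      have : t * m = (-n) * p := by
        have : (t : ℚ) * m = (-n) * p := by linarith
        exact_mod_cast this
      exact (hpz.dvd_or_dvd (Dvd.intro_left _ this.symm)).resolve_right hcon
    obtain ⟨s', rfl⟩ := hs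
    obtain ⟨t', rfl⟩ := ht
    have := aps_prim hv0 hprim (p := p) (u := s' • e + t' • f)
      (L.add_mem (L.smul_mem _ heL) (L.smul_mem _ hfL))
      (by rw [hst, smul_add, smul_smul, smul_smul])
    rw [Int.isUnit_iff_natAbs_eq] at this
    exact hp.one_lt.ne' (by simpa using this)
  obtain ⟨m', hm'⟩ := hpm
  obtain ⟨l, hl, hlx⟩ := hproj (F i0) (hdec.2.1 i0)
  have h1 : B l v = -p := by
    rw [← hlx v hvL₁, bilin_antisymm B halt, hv0i]
  obtain ⟨n, hn⟩ := hpair (E i0) (hdec.1 i0) l hl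
  obtain ⟨r, hr⟩ := aps_dE halt hdec (hle hl) k
  rw [hv, map_add, aps_zr, hr, bilin_antisymm B halt, hn, hm', hq] at h1
  have h2 : (p : ℤ) * (p * (n * m' - r * q)) = p * 1 := by
    have : (p : ℚ) * (p * (n * m' - r * q)) = p * 1 := by
      push_cast at h1
      linear_combination -h1
    exact_mod_cast this
  have h3 := mul_left_cancel₀ (by exact_mod_cast hp.ne_zero) h2
  have h4 := IsUnit.of_mul_eq_one _ h3
  rw [Int.isUnit_iff_natAbs_eq] at h4
  exact hp.one_lt.ne' (by simpa using h4)

end aps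

/-- If `Λ` has type `(d₁, …, d_g)` with `d₁ = d₂ = 1`, then every primitive vector of
`Λ` is splitting iff `d₃, d₄/d₃, …, d_g/d_{g-1}` are square-free and pairwise coprime. -/
theorem all_primitive_splitting_iff
    (V : Type) [AddCommGroup V] [Module ℚ V]
    (B : V →ₗ[ℚ] V →ₗ[ℚ] ℚ)
    (halt : ∀ v, B v v = 0)
    (hnd : ∀ v : V, (∀ w, B v w = 0) → v = 0)
    (L : Submodule ℤ V) (hfg : L.FG)
    (hspan : Submodule.span ℚ (L : Set V) = ⊤)
    (hint : ∀ x ∈ L, ∀ y ∈ L, ∃ n : ℤ, B x y = (n : ℚ))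
    (g : ℕ) (hg : 2 ≤ g)
    (dd : Fin g → ℕ) (hpos : ∀ i, 0 < dd i)
    (hdvd : ∀ i j : Fin g, i ≤ j → dd i ∣ dd j)
    (hd1 : dd ⟨0, by omega⟩ = 1) (hd2 : dd ⟨1, by omega⟩ = 1)
    (E F : Fin g → V)
    (hdec : OrthoDecompType B L dd E F) :
    (∀ v : V, v ≠ 0 → IsPrimitive L v → IsSplitVec B L v) ↔
      ((∀ i j : Fin g, 1 ≤ (i : ℕ) → (j : ℕ) = (i : ℕ) + 1 → Squarefree (dd j / dd i)) ∧
        (∀ i j i' j' : Fin g, 1 ≤ (i : ℕ) → (j : ℕ) = (i : ℕ) + 1 →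
          1 ≤ (i' : ℕ) → (j' : ℕ) = (i' : ℕ) + 1 → i ≠ i' →
          Nat.Coprime (dd j / dd i) (dd j' / dd i'))) := by
  constructor
  · intro h
    exact aps_arith_mp hg dd hdvd (aps_backward halt hfg hint hpos hdec _ hd1 h)
  · intro h v hv0 hp
    exact aps_forward halt hpos hdec (aps_arith_mpr hg dd hdvd
      (fun i hi => by rw [← hd1]; congr 1; exact Fin.ext hi)
      (fun i hi => by rw [← hd2]; congr 1; exact Fin.ext hi) h) hv0 hp
end
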